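/- Assume sup_{y∈𝒴} R(y) − inf_{y∈𝒴} R(y) ≤ 1, that 𝒜 is a finite subset of ℝ^d, and that the conditional means are linear: there is a map μ : 𝒜 → ℝ^d such that for every a ∈ 𝒜 and every a* ∈ 𝒜 with ℙ(A* = a*) > 0, E[R(Y_a) | A* = a*] = aᵀ μ(a*), and for every a ∈ 𝒜, E[R(Y_a)] = aᵀ μ̄ where μ̄ = Σ_{a*∈𝒜} ℙ(A* = a*) μ(a*). Then ( E[R(Y_{A*}) − R(Y_A)] )² ≤ (d/2) · I(A*; (A, Y_A)), i.e. the information ratio of Thompson sampling for linear bandit problems is at most d/2. -/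

import Mathlib

open MeasureTheory ProbabilityTheory Real

/-- Mutual information between two finitely-valued random variables `X` and `Z`
under the measure `μ`: the Kullback--Leibler divergence between the joint law
of `(X, Z)` and the product of the marginal laws. -/
noncomputable def mutualInfo {Ω : Type*} [MeasurableSpace Ω] (μ : Measure Ω)
    {𝒳 𝒵 : Type*} [Fintype 𝒳] [Fintype 𝒵] (X : Ω → 𝒳) (Z : Ω → 𝒵) : ℝ :=
  ∑ x : 𝒳, ∑ z : 𝒵,
    (μ {ω | X ω = x ∧ Z ω = z}).toReal *
      Real.log ((μ {ω | X ω = x ∧ Z ω = z}).toReal /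
        ((μ {ω | X ω = x}).toReal * (μ {ω | Z ω = z}).toReal))

/-!
Collect the conditional mean deviations of the rewards in the matrix
`M a x = √ℙ(A* = a) √ℙ(A* = x) (E[R(Y_a) | A* = x] - E[R(Y_a)])`. Since `A` has the law of `A*` and
is independent of the rest, the regret is `tr M`. Cauchy–Schwarz against an orthonormal basis of
the column space gives `(tr M)² ≤ rank M · ‖M‖_F²`, and linearity factors `M` through `ℝ^d`.
Finally `I(A*; (A, Y_A)) = ∑ a x, ℙ(A* = a) ℙ(A* = x) KL(law(Y_a | A* = x) ‖ law(Y_a))`, and each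
divergence dominates twice the squared mean deviation: insert an affine function of the reward into
the Donsker–Varadhan bound and apply Hoeffding's lemma. Hence `‖M‖_F² ≤ I / 2`.
-/

section Trace

variable {ι 𝕜 : Type*} [Fintype ι] [RCLike 𝕜]

theorem norm_trace_sq_le_finrank_range_mul_sum {E : Type*} [NormedAddCommGroup E]
    [InnerProductSpace 𝕜 E] (b : OrthonormalBasis ι 𝕜 E) (T : E →ₗ[𝕜] E) :
    ‖T.trace 𝕜 E‖ ^ 2 ≤ Module.finrank 𝕜 T.range * ∑ i, ‖T (b i)‖ ^ 2 := by
  have : FiniteDimensional 𝕜 E := b.toBasis.finiteDimensional_of_finite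
  let e := stdOrthonormalBasis 𝕜 T.range
  have trace_eq :
      T.trace 𝕜 E = ∑ i, ∑ j, inner 𝕜 (b i) (e j : E) * inner 𝕜 (e j : E) (T (b i)) := by
    rw [T.trace_eq_sum_inner b]
    refine Finset.sum_congr rfl fun i _ => ?_
    have expansion := congrArg (fun v : T.range => inner 𝕜 (b i) (v : E))
      (e.sum_repr' ⟨T (b i), T.mem_range_self (b i)⟩)
    simpa [inner_sum, inner_smul_right, mul_comm] using expansion.symm
  have sum_basis : ∑ i, ∑ j, ‖inner 𝕜 (b i) (e j : E)‖ ^ 2 = Module.finrank 𝕜 T.range := by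
    rw [Finset.sum_comm]
    have norm_e (j) : ‖(e j : E)‖ = 1 := e.norm_eq_one j
    simp [b.sum_sq_norm_inner_right, norm_e]
  have sum_image (i : ι) : ∑ j, ‖inner 𝕜 (e j : E) (T (b i))‖ ^ 2 = ‖T (b i)‖ ^ 2 :=
    e.sum_sq_norm_inner_right ⟨T (b i), T.mem_range_self (b i)⟩
  calc ‖T.trace 𝕜 E‖ ^ 2
      ≤ (∑ i, ∑ j, ‖inner 𝕜 (b i) (e j : E)‖ * ‖inner 𝕜 (e j : E) (T (b i))‖) ^ 2 := by
        rw [trace_eq]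
        gcongr
        exact norm_sum_le_of_le _ fun i _ => norm_sum_le_of_le _ fun j _ => norm_mul_le _ _
    _ ≤ (∑ i, ∑ j, ‖inner 𝕜 (b i) (e j : E)‖ ^ 2) *
          ∑ i, ∑ j, ‖inner 𝕜 (e j : E) (T (b i))‖ ^ 2 := by
        simp only [← Fintype.sum_prod_type']
        exact Finset.sum_mul_sq_le_sq_mul_sq _ _ _
    _ = Module.finrank 𝕜 T.range * ∑ i, ‖T (b i)‖ ^ 2 := by simp only [sum_basis, sum_image]

theorem norm_trace_sq_le_rank_mul_sum (M : Matrix ι ι 𝕜) :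
    ‖M.trace‖ ^ 2 ≤ M.rank * ∑ i, ∑ j, ‖M i j‖ ^ 2 := by
  classical
  let b := EuclideanSpace.basisFun ι 𝕜
  have h := norm_trace_sq_le_finrank_range_mul_sum b (M.toLin b.toBasis b.toBasis)
  rw [Matrix.trace_toLin_eq, ← M.rank_eq_finrank_range_toLin] at h
  have apply_basis (i j : ι) : M.toLin b.toBasis b.toBasis (b j) i = M i j := by
    rw [← Matrix.toEuclideanLin_eq_toLin_orthonormal]
    simp [b]
  rw [Finset.sum_comm]
  simpa only [EuclideanSpace.norm_sq_eq, apply_basis] using h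

end Trace

section KullbackLeibler

open InformationTheory

variable {α : Type*} [MeasurableSpace α] {μ ν : Measure α}

section Transport

variable [IsProbabilityMeasure μ] [IsProbabilityMeasure ν] {f : α → ℝ}

-- One half of the Donsker–Varadhan formula: Gibbs' inequality for `μ` and `ν` tilted by `f`.
theorem integral_sub_log_integral_exp_le_toReal_klDiv (hμν : klDiv μ ν ≠ ⊤)
    (hfμ : Integrable f μ) (hfν : Integrable (fun x => exp (f x)) ν) :
    ∫ x, f x ∂μ - log (∫ x, exp (f x) ∂ν) ≤ (klDiv μ ν).toReal := by
  obtain ⟨hac, hint⟩ := klDiv_ne_top_iff.1 hμν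
  have := isProbabilityMeasure_tilted hfν
  have gibbs := integral_llr_add_sub_measure_univ_nonneg
    (hac.trans (absolutelyContinuous_tilted hfν)) (integrable_llr_tilted_right hac hfμ hint hfν)
  rw [integral_llr_tilted_right hac hfμ hfν hint, probReal_univ, probReal_univ] at gibbs
  rw [toReal_klDiv_of_measure_eq hac (by simp)]
  linarith

theorem sq_integral_sub_integral_le_of_hasSubgaussianMGF {c : NNReal} (hμν : klDiv μ ν ≠ ⊤)
    (hfμ : Integrable f μ) (hf : HasSubgaussianMGF (fun x => f x - ν[f]) c ν) :
    (μ[f] - ν[f]) ^ 2 ≤ 2 * c * (klDiv μ ν).toReal := by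
  have quadratic_nonneg (t : ℝ) :
      0 ≤ c / 2 * (t * t) + -(μ[f] - ν[f]) * t + (klDiv μ ν).toReal := by
    have donsker_varadhan := integral_sub_log_integral_exp_le_toReal_klDiv hμν
      ((hfμ.sub (integrable_const ν[f])).const_mul t) (hf.integrable_exp_mul t)
    have subgaussian : log (∫ x, exp (t * (f x - ν[f])) ∂ν) ≤ c * t ^ 2 / 2 := hf.cgf_le t
    simp only [Pi.sub_apply] at donsker_varadhan
    rw [integral_const_mul, integral_sub hfμ (integrable_const _), integral_const, probReal_univ,
      one_smul] at donsker_varadhan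
    linarith
  have discrim_nonpos := discrim_le_zero quadratic_nonneg
  rw [discrim, neg_sq] at discrim_nonpos
  linarith

theorem sq_integral_sub_integral_le_of_mem_Icc {a b : ℝ} (hμν : klDiv μ ν ≠ ⊤)
    (hf : Measurable f) (hab : ∀ x, f x ∈ Set.Icc a b) :
    (μ[f] - ν[f]) ^ 2 ≤ (b - a) ^ 2 / 2 * (klDiv μ ν).toReal := by
  have hoeffding := hasSubgaussianMGF_of_mem_Icc (μ := ν) hf.aemeasurable (.of_forall hab)
  refine (sq_integral_sub_integral_le_of_hasSubgaussianMGF hμν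
    (.of_mem_Icc a b hf.aemeasurable (.of_forall hab)) hoeffding).trans_eq ?_
  simp only [NNReal.coe_pow, NNReal.coe_div, coe_nnnorm, norm_eq_abs, NNReal.coe_ofNat, div_pow,
    sq_abs]
  ring

end Transport

variable [MeasurableSingletonClass α] [IsFiniteMeasure μ] [IsFiniteMeasure ν]

theorem toReal_rnDeriv_eq_measureReal_div (hμν : μ ≪ ν) {x : α} (hx : ν {x} ≠ 0) :
    (μ.rnDeriv ν x).toReal = μ.real {x} / ν.real {x} := by
  have h := Measure.setLIntegral_rnDeriv hμν {x}
  rw [lintegral_singleton] at h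
  rw [measureReal_def, ← h, ENNReal.toReal_mul, ← measureReal_def,
    mul_div_cancel_right₀ _ ((measureReal_ne_zero_iff (by finiteness)).2 hx)]

theorem toReal_klDiv_eq_sum [Fintype α] (hμν : μ ≪ ν) (h_eq : μ .univ = ν .univ) :
    (klDiv μ ν).toReal = ∑ x, μ.real {x} * log (μ.real {x} / ν.real {x}) := by
  rw [toReal_klDiv_of_measure_eq hμν h_eq, integral_fintype .of_finite]
  refine Finset.sum_congr rfl fun x _ => ?_
  by_cases hx : ν {x} = 0
  · simp [measureReal_def, hμν hx]
  · rw [llr, toReal_rnDeriv_eq_measureReal_div hμν hx, smul_eq_mul]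

end KullbackLeibler

section MutualInfo

open InformationTheory

variable {Ω 𝒜 𝒳 𝒵 : Type*} [MeasurableSpace Ω] {μ : Measure Ω}
  [Fintype 𝒜] [MeasurableSpace 𝒜] [MeasurableSingletonClass 𝒜]
  [Fintype 𝒳] [MeasurableSpace 𝒳] [MeasurableSingletonClass 𝒳]
  [Fintype 𝒵] [MeasurableSpace 𝒵] [MeasurableSingletonClass 𝒵]
  {A : Ω → 𝒜} {X : Ω → 𝒳} {Z : Ω → 𝒵} {Y : 𝒜 → Ω → 𝒵}

theorem mutualInfo_prodMk_eval_eq_sum (hindep : ∀ a, IndepFun A (fun ω => (X ω, Y a ω)) μ) :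
    mutualInfo μ X (fun ω => (A ω, Y (A ω) ω)) =
      ∑ a, μ.real (A ⁻¹' {a}) * mutualInfo μ X (Y a) := by
  have joint (a : 𝒜) (x : 𝒳) (y : 𝒵) :
      (μ {ω | X ω = x ∧ (A ω, Y (A ω) ω) = (a, y)}).toReal =
        μ.real (A ⁻¹' {a}) * (μ {ω | X ω = x ∧ Y a ω = y}).toReal := by
    have fiber : {ω | X ω = x ∧ (A ω, Y (A ω) ω) = (a, y)} =
        A ⁻¹' {a} ∩ (fun ω => (X ω, Y a ω)) ⁻¹' {(x, y)} := by
      ext; simp; grind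
    rw [fiber, (hindep a).measure_inter_preimage_eq_mul _ _ (.singleton a) (.singleton (x, y)),
      ENNReal.toReal_mul, measureReal_def]
    congr 3; ext; simp
  have marginal (a : 𝒜) (y : 𝒵) :
      (μ {ω | (A ω, Y (A ω) ω) = (a, y)}).toReal =
        μ.real (A ⁻¹' {a}) * (μ {ω | Y a ω = y}).toReal := by
    have indep_outcome : IndepFun A (Y a) μ := (hindep a).comp measurable_id measurable_snd
    have fiber : {ω | (A ω, Y (A ω) ω) = (a, y)} = A ⁻¹' {a} ∩ Y a ⁻¹' {y} := by
      ext; simp; grind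
    rw [fiber, indep_outcome.measure_inter_preimage_eq_mul _ _ (.singleton a) (.singleton y),
      ENNReal.toReal_mul, measureReal_def]
    rfl
  simp only [mutualInfo, Fintype.sum_prod_type, joint, marginal, Finset.mul_sum]
  rw [Finset.sum_comm]
  refine Finset.sum_congr rfl fun a _ => Finset.sum_congr rfl fun x _ =>
    Finset.sum_congr rfl fun y _ => ?_
  by_cases ha : μ.real (A ⁻¹' {a}) = 0
  · simp [ha]
  · rw [mul_left_comm (μ {ω | X ω = x}).toReal, mul_div_mul_left _ _ ha, mul_assoc]

variable [IsProbabilityMeasure μ]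

theorem mutualInfo_eq_sum_toReal_klDiv (hX : Measurable X) (hZ : Measurable Z) :
    mutualInfo μ X Z =
      ∑ x, μ.real (X ⁻¹' {x}) * (klDiv (μ[|X ← x].map Z) (μ.map Z)).toReal := by
  refine Finset.sum_congr rfl fun x _ => ?_
  by_cases hx : μ (X ⁻¹' {x}) = 0
  · have null (z : 𝒵) : μ {ω | X ω = x ∧ Z ω = z} = 0 := measure_mono_null (fun ω h => h.1) hx
    simp [null, measureReal_def, hx]
  have := cond_isProbabilityMeasure hx
  have hpos : μ.real (X ⁻¹' {x}) ≠ 0 := (measureReal_ne_zero_iff (by finiteness)).2 hx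
  have joint (z : 𝒵) : μ.real (X ⁻¹' {x} ∩ Z ⁻¹' {z}) =
      μ.real (X ⁻¹' {x}) * (μ[|X ← x].map Z).real {z} := by
    rw [map_measureReal_apply hZ (.singleton z), mul_comm]
    simp only [measureReal_def]
    rw [← ENNReal.toReal_mul, cond_mul_eq_inter (hX (.singleton x))]
  have marginal (z : 𝒵) : (μ.map Z).real {z} = μ.real (Z ⁻¹' {z}) :=
    map_measureReal_apply hZ (.singleton z)
  have map_univ_eq : (μ[|X ← x].map Z) .univ = (μ.map Z) .univ := by
    simp [Measure.map_apply hZ]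
  rw [toReal_klDiv_eq_sum (cond_absolutelyContinuous.map hZ) map_univ_eq, Finset.mul_sum]
  refine Finset.sum_congr rfl fun z _ => ?_
  change μ.real (X ⁻¹' {x} ∩ Z ⁻¹' {z}) * log (μ.real (X ⁻¹' {x} ∩ Z ⁻¹' {z}) /
    (μ.real (X ⁻¹' {x}) * μ.real (Z ⁻¹' {z}))) = _
  rw [joint, marginal, mul_div_mul_left _ _ hpos, mul_assoc]

theorem sum_mul_sq_integral_cond_sub_integral_le_mutualInfo (hX : Measurable X)
    (hZ : Measurable Z) {f : 𝒵 → ℝ} {a b : ℝ} (hf : ∀ z, f z ∈ Set.Icc a b) :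
    ∑ x, μ.real (X ⁻¹' {x}) * (∫ ω, f (Z ω) ∂μ[|X ← x] - ∫ ω, f (Z ω) ∂μ) ^ 2 ≤
      (b - a) ^ 2 / 2 * mutualInfo μ X Z := by
  rw [mutualInfo_eq_sum_toReal_klDiv hX hZ, Finset.mul_sum]
  refine Finset.sum_le_sum fun x _ => ?_
  rw [mul_left_comm]
  by_cases hx : μ (X ⁻¹' {x}) = 0
  · simp [measureReal_def, hx]
  have := cond_isProbabilityMeasure hx
  have := Measure.isProbabilityMeasure_map (μ := μ) hZ.aemeasurable
  have := Measure.isProbabilityMeasure_map (μ := μ[|X ← x]) hZ.aemeasurable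
  have hfm := measurable_of_finite f
  have transport := sq_integral_sub_integral_le_of_mem_Icc
    (klDiv_ne_top ((cond_absolutelyContinuous (μ := μ) (s := X ⁻¹' {x})).map hZ) .of_finite) hfm hf
  rw [integral_map hZ.aemeasurable hfm.aestronglyMeasurable,
    integral_map hZ.aemeasurable hfm.aestronglyMeasurable] at transport
  gcongr

end MutualInfo

section Eval

variable {Ω 𝒜 E : Type*} [MeasurableSpace Ω] {μ : Measure Ω} [NormedAddCommGroup E]
  [MeasurableSpace 𝒜] [MeasurableSingletonClass 𝒜] {B : Ω → 𝒜} {f : 𝒜 → Ω → E}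

theorem integrableOn_fiber_eval (hB : Measurable B) (hf : ∀ a, Integrable (f a) μ) (a : 𝒜) :
    IntegrableOn (fun ω => f (B ω) ω) (B ⁻¹' {a}) μ :=
  (hf a).integrableOn.congr_fun (fun ω (hω : B ω = a) => by simp only [hω]) (hB (.singleton a))

theorem integrable_eval [Finite 𝒜] (hB : Measurable B) (hf : ∀ a, Integrable (f a) μ) :
    Integrable (fun ω => f (B ω) ω) μ := by
  rw [← integrableOn_univ, ← Set.preimage_univ (f := B), ← Set.iUnion_of_singleton,
    Set.preimage_iUnion, integrableOn_finite_iUnion]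
  exact integrableOn_fiber_eval hB hf

theorem integral_eval_eq_sum_setIntegral [Fintype 𝒜] [NormedSpace ℝ E] (hB : Measurable B)
    (hf : ∀ a, Integrable (f a) μ) :
    ∫ ω, f (B ω) ω ∂μ = ∑ a, ∫ ω in B ⁻¹' {a}, f a ω ∂μ := by
  have disjoint_fibers : Pairwise (Function.onFun Disjoint fun a => B ⁻¹' {a}) :=
    fun _ _ hab => (Set.disjoint_singleton.2 hab).preimage B
  rw [← setIntegral_univ, ← Set.preimage_univ (f := B), ← Set.iUnion_of_singleton,
    Set.preimage_iUnion, integral_iUnion_fintype (fun a => hB (.singleton a)) disjoint_fibers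
      (integrableOn_fiber_eval hB hf)]
  refine Finset.sum_congr rfl fun a _ => setIntegral_congr_fun (hB (.singleton a)) ?_
  exact fun ω (hω : B ω = a) => by simp only [hω]

theorem measureReal_smul_integral_cond [IsFiniteMeasure μ] [NormedSpace ℝ E] (s : Set Ω)
    (g : Ω → E) : μ.real s • ∫ ω, g ω ∂μ[|s] = ∫ ω in s, g ω ∂μ := by
  by_cases hs : μ s = 0
  · simp [measureReal_def, hs]
  · rw [ProbabilityTheory.cond, integral_smul_measure, ENNReal.toReal_inv, ← measureReal_def,
      smul_inv_smul₀ ((measureReal_ne_zero_iff (by finiteness)).2 hs)]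

end Eval

section ThompsonSampling

variable {Ω 𝒜 : Type*} [MeasurableSpace Ω] {μ : Measure Ω} {Astar A : Ω → 𝒜} {r : 𝒜 → Ω → ℝ}

/-- The matrix whose `(a, x)` entry is the deviation `E[r_a | A* = x] - E[r_a]` of the conditional
mean reward, weighted by `√ℙ(A* = a) √ℙ(A* = x)` so that its trace is the regret of Thompson
sampling. The weights vanish on the columns with `ℙ(A* = x) = 0`, where conditioning yields the
zero measure. -/
noncomputable def meanDeviationMatrix (μ : Measure Ω) (Astar : Ω → 𝒜) (r : 𝒜 → Ω → ℝ) :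
    Matrix 𝒜 𝒜 ℝ :=
  .of fun a x => √(μ.real (Astar ⁻¹' {a})) * √(μ.real (Astar ⁻¹' {x})) *
    (∫ ω, r a ω ∂μ[|Astar ← x] - ∫ ω, r a ω ∂μ)

variable [Fintype 𝒜]

theorem rank_meanDeviationMatrix_le {ι : Type*} [Fintype ι] {φ θ : 𝒜 → ι → ℝ} {θ₀ : ι → ℝ}
    (hcond : ∀ a x, μ (Astar ⁻¹' {x}) ≠ 0 → ∫ ω, r a ω ∂μ[|Astar ← x] = φ a ⬝ᵥ θ x)
    (hmean : ∀ a, ∫ ω, r a ω ∂μ = φ a ⬝ᵥ θ₀) :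
    (meanDeviationMatrix μ Astar r).rank ≤ Fintype.card ι := by
  let L : Matrix 𝒜 ι ℝ := .of fun a => √(μ.real (Astar ⁻¹' {a})) • φ a
  let N : Matrix ι 𝒜 ℝ := .of fun i x => √(μ.real (Astar ⁻¹' {x})) * (θ x i - θ₀ i)
  have factorization : meanDeviationMatrix μ Astar r = L * N := by
    ext a x
    by_cases hx : μ (Astar ⁻¹' {x}) = 0
    · simp [meanDeviationMatrix, L, N, Matrix.mul_apply, measureReal_def, hx]
    · simp only [meanDeviationMatrix, Matrix.of_apply, hcond a x hx, hmean, L, N,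
        Matrix.mul_apply, dotProduct, ← Finset.sum_sub_distrib, Finset.mul_sum, Pi.smul_apply,
        smul_eq_mul]
      exact Finset.sum_congr rfl fun i _ => by ring
  rw [factorization]
  exact (L.rank_mul_le_left N).trans L.rank_le_card_width

variable [MeasurableSpace 𝒜] [MeasurableSingletonClass 𝒜]

theorem trace_meanDeviationMatrix [IsFiniteMeasure μ] (hAstar : Measurable Astar)
    (hA : Measurable A) (hr : ∀ a, Integrable (r a) μ)
    (hmatch : ∀ a, μ (A ⁻¹' {a}) = μ (Astar ⁻¹' {a})) (hindep : ∀ a, IndepFun A (r a) μ) :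
    (meanDeviationMatrix μ Astar r).trace = ∫ ω, (r (Astar ω) ω - r (A ω) ω) ∂μ := by
  rw [integral_sub (integrable_eval hAstar hr) (integrable_eval hA hr),
    integral_eval_eq_sum_setIntegral hAstar hr, integral_eval_eq_sum_setIntegral hA hr,
    ← Finset.sum_sub_distrib]
  refine Finset.sum_congr rfl fun a _ => ?_
  have decoupled : ∫ ω in A ⁻¹' {a}, r a ω ∂μ = μ.real (Astar ⁻¹' {a}) * ∫ ω, r a ω ∂μ := by
    rw [measureReal_def, ← hmatch a]
    exact Indep.setIntegral_eq_mul (f := id) hA.comap_le (hindep a) (hr a).aemeasurable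
      ⟨{a}, .singleton a, rfl⟩ aestronglyMeasurable_id
  rw [decoupled, ← measureReal_smul_integral_cond, smul_eq_mul, ← mul_sub]
  simp [meanDeviationMatrix]

variable [IsProbabilityMeasure μ] {𝒴 : Type*} [Fintype 𝒴] [MeasurableSpace 𝒴]
  [MeasurableSingletonClass 𝒴] {Y : 𝒜 → Ω → 𝒴} {R : 𝒴 → ℝ}

theorem sum_sq_meanDeviationMatrix_le_mutualInfo {b c : ℝ} (hR : ∀ y, R y ∈ Set.Icc b c)
    (hY : ∀ a, Measurable (Y a)) (hAstar : Measurable Astar)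
    (hmatch : ∀ a, μ (A ⁻¹' {a}) = μ (Astar ⁻¹' {a}))
    (hindep : ∀ a, IndepFun A (fun ω => (Astar ω, Y a ω)) μ) :
    ∑ a, ∑ x, meanDeviationMatrix μ Astar (fun a ω => R (Y a ω)) a x ^ 2 ≤
      (c - b) ^ 2 / 2 * mutualInfo μ Astar (fun ω => (A ω, Y (A ω) ω)) := by
  rw [mutualInfo_prodMk_eval_eq_sum hindep, Finset.mul_sum]
  refine Finset.sum_le_sum fun a _ => ?_
  have pinsker := sum_mul_sq_integral_cond_sub_integral_le_mutualInfo (μ := μ) hAstar (hY a) hR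
  simp only [meanDeviationMatrix, Matrix.of_apply, mul_pow, sq_sqrt measureReal_nonneg, mul_assoc,
    ← Finset.mul_sum]
  rw [mul_left_comm, measureReal_def (s := A ⁻¹' {a}), hmatch a, ← measureReal_def]
  gcongr

theorem information_ratio_le_dim_div_two_of_linear_general {w : ℝ} {d : ℕ}
    (hR : (⨆ y, R y) - (⨅ y, R y) ≤ w) (hY : ∀ a, Measurable (Y a))
    (hAstar : Measurable Astar) (hA : Measurable A)
    (hmatch : ∀ a, μ (A ⁻¹' {a}) = μ (Astar ⁻¹' {a}))
    (hindep : ∀ a, IndepFun A (fun ω => (Astar ω, Y a ω)) μ)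
    (hrank : (meanDeviationMatrix μ Astar fun a ω => R (Y a ω)).rank ≤ d) :
    (∫ ω, (R (Y (Astar ω) ω) - R (Y (A ω) ω)) ∂μ) ^ 2 ≤
      w ^ 2 * (d / 2) * mutualInfo μ Astar (fun ω => (A ω, Y (A ω) ω)) := by
  set M := meanDeviationMatrix μ Astar fun a ω => R (Y a ω)
  have reward_mem (y : 𝒴) : R y ∈ Set.Icc (⨅ y, R y) ((⨅ y, R y) + w) :=
    ⟨ciInf_le (Set.finite_range R).bddBelow y,
      (le_ciSup (Set.finite_range R).bddAbove y).trans (sub_le_iff_le_add'.1 hR)⟩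
  have hRm := measurable_of_finite R
  have reward_integrable (a : 𝒜) : Integrable (fun ω => R (Y a ω)) μ :=
    .of_mem_Icc _ _ (hRm.comp (hY a)).aemeasurable (.of_forall fun ω => reward_mem (Y a ω))
  have regret : M.trace = ∫ ω, (R (Y (Astar ω) ω) - R (Y (A ω) ω)) ∂μ :=
    trace_meanDeviationMatrix hAstar hA reward_integrable hmatch fun a =>
      (hindep a).comp measurable_id (hRm.comp measurable_snd)
  have information := sum_sq_meanDeviationMatrix_le_mutualInfo reward_mem hY hAstar hmatch hindep
  rw [add_sub_cancel_left] at information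
  calc (∫ ω, (R (Y (Astar ω) ω) - R (Y (A ω) ω)) ∂μ) ^ 2
      = M.trace ^ 2 := by rw [regret]
    _ ≤ M.rank * ∑ a, ∑ x, M a x ^ 2 := by
        simpa only [norm_eq_abs, sq_abs] using norm_trace_sq_le_rank_mul_sum M
    _ ≤ d * (w ^ 2 / 2 * mutualInfo μ Astar (fun ω => (A ω, Y (A ω) ω))) := by gcongr
    _ = w ^ 2 * (d / 2) * mutualInfo μ Astar (fun ω => (A ω, Y (A ω) ω)) := by ring

end ThompsonSampling

/-- **Proposition 5** (information ratio for linear optimization under bandit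
feedback). Suppose the action set `𝒜` is a finite subset of `ℝ^d`, rewards have
range of width at most one, and the conditional mean rewards are linear:
`E[R(Y_a) | A* = a*] = aᵀ μlin(a*)` and `E[R(Y_a)] = aᵀ μ̄` with
`μ̄ = Σ_{a*} ℙ(A* = a*) μlin(a*)`. Then under Thompson sampling
`(E[R(Y_{A*}) − R(Y_A)])² ≤ (d/2) · I(A*; (A, Y_A))`. -/
theorem information_ratio_le_dim_div_two_of_linear
    {Ω : Type*} [MeasurableSpace Ω] (μ : Measure Ω) [IsProbabilityMeasure μ]
    {d : ℕ} (𝒜 : Finset (Fin d → ℝ)) (h𝒜 : 𝒜.Nonempty)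
    {𝒴 : Type*} [Fintype 𝒴] [Nonempty 𝒴]
    [MeasurableSpace 𝒴] [MeasurableSingletonClass 𝒴]
    (Y : ↥𝒜 → Ω → 𝒴) (Astar A : Ω → ↥𝒜) (R : 𝒴 → ℝ)
    (hR : (⨆ y, R y) - (⨅ y, R y) ≤ 1)
    (hYmeas : ∀ a, Measurable (Y a)) (hAstarMeas : Measurable Astar)
    (hAMeas : Measurable A)
    (hmatch : ∀ a : ↥𝒜, μ {ω | A ω = a} = μ {ω | Astar ω = a})
    (hindep : IndepFun A (fun ω => (Astar ω, fun a => Y a ω)) μ)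
    (μlin : ↥𝒜 → (Fin d → ℝ))
    (hlin : ∀ (a astar : ↥𝒜), μ {ω | Astar ω = astar} ≠ 0 →
      ∫ ω, R (Y a ω) ∂(μ[|{ω | Astar ω = astar}]) =
        ∑ i, (a : Fin d → ℝ) i * μlin astar i)
    (hlinMean : ∀ a : ↥𝒜,
      ∫ ω, R (Y a ω) ∂μ =
        ∑ i, (a : Fin d → ℝ) i *
          (∑ astar : ↥𝒜, (μ {ω | Astar ω = astar}).toReal * μlin astar i)) :
    (∫ ω, (R (Y (Astar ω) ω) - R (Y (A ω) ω)) ∂μ) ^ 2 ≤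
      ((d : ℝ) / 2) * mutualInfo μ Astar (fun ω => (A ω, Y (A ω) ω)) := by
  have indep_outcome (a : ↥𝒜) : IndepFun A (fun ω => (Astar ω, Y a ω)) μ :=
    hindep.comp measurable_id
      (measurable_fst.prodMk ((measurable_pi_apply a).comp measurable_snd))
  have rank_le := (rank_meanDeviationMatrix_le hlin hlinMean).trans_eq (Fintype.card_fin d)
  simpa using information_ratio_le_dim_div_two_of_linear_general hR hYmeas hAstarMeas hAMeas hmatch
    indep_outcome rank_le
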